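/- arXiv:math/0012191 — 7 statements merged into one kernel-verified Lean document; each statement's English description precedes it below -/
import Mathlib

section
/- With the convention φ₊^{(−1)} = ψ₊^{(−1)} = φ₋^{(−1)} = ψ₋^{(−1)} = 0, the following hold for all n ∈ ℤ. If α ∉ ℤ then for every integer i ≥ 0, and if α ∈ ℤ then for every 0 ≤ i ≤ |α|−1: (L_{α,β;ε} φ₊^{(i)})(n) − φ₊^{(i)}(n) = φ₊^{(i−1)}(n) and (L_{α,β;ε} ψ₊^{(i)})(n) − ψ₊^{(i)}(n) = ψ₊^{(i−1)}(n). If β ∉ ℤ then for every integer i ≥ 0, and if β ∈ ℤ then for every 0 ≤ i ≤ |β|−1: (L_{α,β;ε} φ₋^{(i)})(n) + φ₋^{(i)}(n) = φ₋^{(i−1)}(n) and (L_{α,β;ε} ψ₋^{(i)})(n) + ψ₋^{(i)}(n) = ψ₋^{(i−1)}(n). -/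
/-- Pochhammer symbol `(a)_n` for complex `a` and integer `n`. -/
noncomputable def poch (a : ℂ) (n : ℤ) : ℂ :=
  if 0 ≤ n then ∏ j ∈ Finset.range n.toNat, (a + (j : ℂ))
  else (∏ j ∈ Finset.range (-n).toNat, (a + (n : ℂ) + (j : ℂ)))⁻¹

/-- Gauss hypergeometric series `F(a,b;c;x)`. -/
noncomputable def hypF (a b c x : ℂ) : ℂ :=
  ∑' j : ℕ, (poch a (j : ℤ) * poch b (j : ℤ)) / ((j.factorial : ℂ) * poch c (j : ℤ)) * x ^ j

/-- The Jacobi difference operator `L_{α,β;ε}`. -/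
noncomputable def jacobiL (α β ε : ℂ) (f : ℤ → ℂ) (n : ℤ) : ℂ :=
  (2 * ((n : ℂ) + ε + 1) * ((n : ℂ) + ε + α + β + 1) /
      ((2 * (n : ℂ) + 2 * ε + α + β + 1) * (2 * (n : ℂ) + 2 * ε + α + β + 2))) * f (n + 1)
  + ((β ^ 2 - α ^ 2) /
      ((2 * (n : ℂ) + 2 * ε + α + β) * (2 * (n : ℂ) + 2 * ε + α + β + 2))) * f n
  + (2 * ((n : ℂ) + ε + α) * ((n : ℂ) + ε + β) /
      ((2 * (n : ℂ) + 2 * ε + α + β) * (2 * (n : ℂ) + 2 * ε + α + β + 1))) * f (n - 1)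

/-- The eigenvalue `λ_ε(n) = (n+ε)(n+ε+α+β+1)`. -/
noncomputable def lamE (α β ε : ℂ) (n : ℤ) : ℂ := ((n : ℂ) + ε) * ((n : ℂ) + ε + α + β + 1)

/-- The function `p^{α,β}_ε(n,z)` (case `α ∉ ℤ_{<0}`). -/
noncomputable def pStd (α β ε : ℂ) (n : ℤ) (z : ℂ) : ℂ :=
  (poch (ε + α + 1) n / poch (ε + 1) n) *
    hypF (-((n : ℂ) + ε)) ((n : ℂ) + ε + α + β + 1) (α + 1) ((1 - z) / 2)

/-- None of `ε, ε+α, ε+β, ε+α+β, 2ε+α+β` is an integer. -/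
def GoodParams (α β ε : ℂ) : Prop :=
  ∀ m : ℤ, ε ≠ (m : ℂ) ∧ ε + α ≠ (m : ℂ) ∧ ε + β ≠ (m : ℂ) ∧
    ε + α + β ≠ (m : ℂ) ∧ 2 * ε + α + β ≠ (m : ℂ)

/-- `φ₊^{(i)}(n)`. -/
noncomputable def phiPd (α β ε : ℂ) (i : ℕ) (n : ℤ) : ℂ :=
  (poch (ε + α + 1) n / poch (ε + 1) n) *
    (poch (-((n : ℂ) + ε)) (i : ℤ) * poch ((n : ℂ) + ε + α + β + 1) (i : ℤ)) /
      ((-2 : ℂ) ^ i * (i.factorial : ℂ) * poch (α + 1) (i : ℤ))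

/-- `ψ₊^{(i)}(n)`. -/
noncomputable def psiPd (α β ε : ℂ) (i : ℕ) (n : ℤ) : ℂ :=
  (poch (ε + β + 1) n / poch (ε + α + β + 1) n) *
    (poch (-((n : ℂ) + ε + α + β)) (i : ℤ) * poch ((n : ℂ) + ε + 1) (i : ℤ)) /
      ((-2 : ℂ) ^ i * (i.factorial : ℂ) * poch (-α + 1) (i : ℤ))

/-- `φ₋^{(i)}(n)`. -/
noncomputable def phiMd (α β ε : ℂ) (i : ℕ) (n : ℤ) : ℂ :=
  (-1 : ℂ) ^ n * (poch (ε + β + 1) n / poch (ε + 1) n) *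
    (poch (-((n : ℂ) + ε)) (i : ℤ) * poch ((n : ℂ) + ε + α + β + 1) (i : ℤ)) /
      ((2 : ℂ) ^ i * (i.factorial : ℂ) * poch (β + 1) (i : ℤ))

/-- `ψ₋^{(i)}(n)`. -/
noncomputable def psiMd (α β ε : ℂ) (i : ℕ) (n : ℤ) : ℂ :=
  (-1 : ℂ) ^ n * (poch (ε + α + 1) n / poch (ε + α + β + 1) n) *
    (poch (-((n : ℂ) + ε + α + β)) (i : ℤ) * poch ((n : ℂ) + ε + 1) (i : ℤ)) /
      ((2 : ℂ) ^ i * (i.factorial : ℂ) * poch (-β + 1) (i : ℤ))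

theorem poch_zero' (a : ℂ) : poch a 0 = 1 := by simp [poch]

theorem poch_nat (a : ℂ) (k : ℕ) : poch a (k : ℤ) = ∏ j ∈ Finset.range k, (a + (j : ℂ)) := by
  simp [poch]

theorem poch_nat_succ (a : ℂ) (k : ℕ) :
    poch a ((k + 1 : ℕ) : ℤ) = poch a (k : ℤ) * (a + k) := by
  rw [poch_nat, poch_nat, Finset.prod_range_succ]

theorem poch_nat_succ_left (a : ℂ) (k : ℕ) :
    poch a ((k + 1 : ℕ) : ℤ) = a * poch (a + 1) (k : ℤ) := by
  rw [poch_nat, poch_nat, Finset.prod_range_succ', mul_comm]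
  congr 1
  · simp
  · refine Finset.prod_congr rfl fun j _ => ?_
    push_cast; ring

theorem poch_neg_nat (a : ℂ) (k : ℕ) :
    poch a (-(k : ℤ)) = (∏ j ∈ Finset.range k, (a - k + (j : ℂ)))⁻¹ := by
  rcases Nat.eq_zero_or_pos k with rfl | hk
  · simp [poch]
  · have : ¬ (0 : ℤ) ≤ -(k : ℤ) := by omega
    simp only [poch, if_neg this]
    simp [sub_eq_add_neg]

theorem poch_int_succ (a : ℂ) (ha : ∀ m : ℤ, a ≠ m) (n : ℤ) :
    poch a (n + 1) = poch a n * (a + n) := by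
  rcases Int.le_total 0 n with h | h
  · obtain ⟨k, rfl⟩ := Int.eq_ofNat_of_zero_le h
    exact_mod_cast poch_nat_succ a k
  · rcases eq_or_lt_of_le h with rfl | h
    · exact_mod_cast poch_nat_succ a 0
    obtain ⟨k, hk⟩ := Int.eq_ofNat_of_zero_le (show 0 ≤ -n - 1 by omega)
    obtain rfl : n = -((k + 1 : ℕ) : ℤ) := by push_cast; omega
    have e : -((k + 1 : ℕ) : ℤ) + 1 = -(k : ℤ) := by push_cast; ring
    rw [e, poch_neg_nat, poch_neg_nat, Finset.prod_range_succ']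
    have h1 : a - ((k + 1 : ℕ) : ℂ) ≠ 0 := by
      rw [sub_ne_zero]; exact_mod_cast ha ((k + 1 : ℕ) : ℤ)
    have h2 : (∏ j ∈ Finset.range k, (a - ((k + 1 : ℕ) : ℂ) + ((j + 1 : ℕ) : ℂ)))
        = ∏ j ∈ Finset.range k, (a - (k : ℂ) + (j : ℂ)) :=
      Finset.prod_congr rfl fun j _ => by push_cast; ring
    rw [h2, mul_inv, mul_assoc]
    have h3 : a - ((k + 1 : ℕ) : ℂ) + ((0 : ℕ) : ℂ) = a - ((k + 1 : ℕ) : ℂ) := by simp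
    have h4 : a + ((-((k + 1 : ℕ) : ℤ) : ℤ) : ℂ) = a - ((k + 1 : ℕ) : ℂ) := by
      push_cast; ring
    rw [h3, h4, inv_mul_cancel₀ h1, mul_one]

theorem poch_int_ne (a : ℂ) (ha : ∀ m : ℤ, a ≠ m) (n : ℤ) : poch a n ≠ 0 := by
  have key : ∀ m : ℤ, a + m ≠ 0 := fun m h => ha (-m) (by push_cast; linear_combination h)
  unfold poch
  split_ifs
  · exact Finset.prod_ne_zero_iff.mpr fun j _ => by exact_mod_cast key j
  · refine inv_ne_zero (Finset.prod_ne_zero_iff.mpr fun j _ => ?_)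
    have := key (n + j)
    push_cast at this
    rwa [add_assoc]

theorem poch_nat_ne (a : ℂ) (i : ℕ)
    (h : (∀ m : ℤ, a ≠ m) ∨ (∃ m : ℤ, a = m ∧ (i : ℤ) ≤ |m| - 1)) :
    poch (a + 1) (i : ℤ) ≠ 0 := by
  rw [poch_nat]
  refine Finset.prod_ne_zero_iff.mpr fun j hj h0 => ?_
  rw [Finset.mem_range] at hj
  have h1 : a = ((-1 - j : ℤ) : ℂ) := by push_cast; linear_combination h0
  rcases h with h | ⟨m, rfl, hm⟩
  · exact h _ h1
  · have h2 : m = -1 - j := by exact_mod_cast h1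
    rw [h2, abs_of_nonpos (by omega)] at hm
    omega

theorem GoodParams.swap {α β ε : ℂ} (h : GoodParams α β ε) : GoodParams β α ε := by
  intro m
  obtain ⟨h1, h2, h3, h4, h5⟩ := h m
  exact ⟨h1, h3, h2, by rwa [add_right_comm], by rwa [add_right_comm]⟩

theorem GoodParams.refl' {α β ε : ℂ} (h : GoodParams α β ε) :
    GoodParams (-α) (-β) (ε + α + β) := by
  intro m
  obtain ⟨h1, h2, h3, h4, h5⟩ := h m
  refine ⟨h4, ?_, ?_, ?_, ?_⟩
  · convert h3 using 1; ring
  · convert h2 using 1; ring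
  · convert h1 using 1; ring
  · convert h5 using 1; ring

theorem phiPd_main (α β ε : ℂ) (hg : GoodParams α β ε) (i : ℕ)
    (hi : (∀ m : ℤ, α ≠ m) ∨ (∃ m : ℤ, α = m ∧ (i : ℤ) ≤ |m| - 1)) (n : ℤ) :
    jacobiL α β ε (phiPd α β ε i) n - phiPd α β ε i n
          = (if i = 0 then 0 else phiPd α β ε (i - 1) n) := by
  have hp := poch_nat_ne α i hi
  have ha : ∀ m : ℤ, ε + α + 1 ≠ m := fun m h =>
    (hg (m - 1)).2.1 (by push_cast; linear_combination h)
  have hb : ∀ m : ℤ, ε + 1 ≠ m := fun m h =>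
    (hg (m - 1)).1 (by push_cast; linear_combination h)
  have hw := poch_int_ne _ hb n
  have x0 : (n : ℂ) + ε ≠ 0 := fun h => (hg (-n)).1 (by push_cast; linear_combination h)
  have x1 : (n : ℂ) + ε + 1 ≠ 0 := fun h => (hg (-n-1)).1 (by push_cast; linear_combination h)
  have xa : (n : ℂ) + ε + α ≠ 0 := fun h => (hg (-n)).2.1 (by push_cast; linear_combination h)
  have d0 : 2 * (n : ℂ) + 2 * ε + α + β ≠ 0 := fun h =>
    (hg (-2*n)).2.2.2.2 (by push_cast; linear_combination h)
  have d1 : 2 * (n : ℂ) + 2 * ε + α + β + 1 ≠ 0 := fun h =>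
    (hg (-2*n-1)).2.2.2.2 (by push_cast; linear_combination h)
  have d2 : 2 * (n : ℂ) + 2 * ε + α + β + 2 ≠ 0 := fun h =>
    (hg (-2*n-2)).2.2.2.2 (by push_cast; linear_combination h)
  have w1 : poch (ε + α + 1) (n + 1) / poch (ε + 1) (n + 1)
      = poch (ε + α + 1) n / poch (ε + 1) n * (((n : ℂ) + ε + α + 1) / ((n : ℂ) + ε + 1)) := by
    rw [poch_int_succ _ ha, poch_int_succ _ hb, mul_div_mul_comm]
    congr 2 <;> ring
  have w2 : poch (ε + α + 1) (n - 1) / poch (ε + 1) (n - 1)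
      = poch (ε + α + 1) n / poch (ε + 1) n * (((n : ℂ) + ε) / ((n : ℂ) + ε + α)) := by
    have e1 := poch_int_succ _ ha (n - 1)
    have e2 := poch_int_succ _ hb (n - 1)
    have hw' := poch_int_ne _ hb (n - 1)
    rw [sub_add_cancel] at e1 e2
    have f1 : ε + α + 1 + ((n - 1 : ℤ) : ℂ) = (n : ℂ) + ε + α := by push_cast; ring
    have f2 : ε + 1 + ((n - 1 : ℤ) : ℂ) = (n : ℂ) + ε := by push_cast; ring
    rw [e1, e2, f1, f2]
    field_simp
  unfold jacobiL phiPd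
  rw [w1, w2]
  generalize poch (ε + α + 1) n / poch (ε + 1) n = w
  have c1 : ((n + 1 : ℤ) : ℂ) + ε = (n : ℂ) + ε + 1 := by push_cast; ring
  have c2 : ((n - 1 : ℤ) : ℂ) + ε = (n : ℂ) + ε - 1 := by push_cast; ring
  rw [c1, c2]
  have g0 : 2 * (n : ℂ) + 2 * ε + α + β = 2 * ((n : ℂ) + ε) + α + β := by ring
  rw [g0] at d0 d1 d2 ⊢
  clear c1 c2 w1 w2 hw ha hb hg g0
  generalize (n : ℂ) + ε = x at *
  rcases i with _ | k
  · simp only [Nat.cast_zero, poch_zero', if_true]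
    simp
    field_simp
    ring
  · simp only [Nat.add_sub_cancel, Nat.succ_ne_zero, if_false]
    rw [poch_nat_succ] at hp
    have hp1 := left_ne_zero_of_mul hp
    have hp2 := right_ne_zero_of_mul hp
    -- shifts
    have s1 : poch (-(x + 1)) ((k + 1 : ℕ) : ℤ) = -(x + 1) * poch (-x) (k : ℤ) := by
      rw [poch_nat_succ_left]; congr 2; ring
    have s2 : (x + α + β + 1) * poch (x + 1 + α + β + 1) ((k + 1 : ℕ) : ℤ)
        = poch (x + α + β + 1) (k : ℤ) * (x + α + β + 1 + k) * (x + α + β + 1 + k + 1) := by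
      have := poch_nat_succ_left (x + α + β + 1) (k + 1)
      rw [poch_nat_succ, poch_nat_succ] at this
      rw [show x + 1 + α + β + 1 = x + α + β + 1 + 1 by ring, ← this]
      push_cast; ring
    have s3 : x * poch (-(x - 1)) ((k + 1 : ℕ) : ℤ)
        = -(poch (-x) (k : ℤ) * (-x + k) * (-x + k + 1)) := by
      have := poch_nat_succ_left (-x) (k + 1)
      rw [poch_nat_succ, poch_nat_succ] at this
      rw [show -(x - 1) = -x + 1 by ring]
      have e : ((k + 1 : ℕ) : ℂ) = (k : ℂ) + 1 := by push_cast; ring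
      rw [e] at this
      linear_combination this
    have s4 : poch (x - 1 + α + β + 1) ((k + 1 : ℕ) : ℤ)
        = (x + α + β) * poch (x + α + β + 1) (k : ℤ) := by
      rw [poch_nat_succ_left, show x - 1 + α + β + 1 = x + α + β by ring]
    rw [s1, s4, poch_nat_succ (-x), poch_nat_succ (x + α + β + 1), poch_nat_succ (α + 1),
      Nat.factorial_succ, pow_succ]
    generalize poch (x + 1 + α + β + 1) ((k + 1 : ℕ) : ℤ) = A at *
    generalize poch (-(x - 1)) ((k + 1 : ℕ) : ℤ) = B at *
    generalize poch (-x) (k : ℤ) = P at *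
    generalize poch (x + α + β + 1) (k : ℤ) = Q at *
    generalize poch (α + 1) (k : ℤ) = R at *
    have hf : (k.factorial : ℂ) ≠ 0 := by exact_mod_cast k.factorial_ne_zero
    have hk : (k : ℂ) + 1 ≠ 0 := by exact_mod_cast k.succ_ne_zero
    have h2 : (-2 : ℂ) ^ k ≠ 0 := pow_ne_zero _ (by norm_num)
    push_cast
    generalize (k.factorial : ℂ) = F at *
    generalize (-2 : ℂ) ^ k = T at *
    generalize (k : ℂ) = K at *
    have main : 2 * (x + α + 1) * -((x + 1) * P * ((x + α + β + 1) * A))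
          / ((2 * x + α + β + 1) * (2 * x + α + β + 2))
        + ((β ^ 2 - α ^ 2) / ((2 * x + α + β) * (2 * x + α + β + 2)) - 1)
          * (P * (-x + K) * (Q * (x + α + β + 1 + K)))
        + 2 * (x + β) * (x * B) * ((x + α + β) * Q)
          / ((2 * x + α + β) * (2 * x + α + β + 1))
        = P * Q * (-2) * (K + 1) * (α + 1 + K) := by
      rw [s2, s3]
      field_simp
      ring
    have main2 := congrArg
      (fun t => w / (T * (-2) * ((K + 1) * F) * (R * (α + 1 + K))) * t) main
    beta_reduce at main2
    have r : w / (T * (-2) * ((K + 1) * F) * (R * (α + 1 + K)))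
        * (P * Q * (-2) * (K + 1) * (α + 1 + K)) = w * (P * Q) / (T * F * R) := by
      field_simp
    rw [r] at main2
    rw [← main2]
    clear main main2 r s2 s3
    generalize (T * (-2) * ((K + 1) * F) * (R * (α + 1 + K))) = D
    have q1 : (x + 1) * ((x + α + 1) / (x + 1)) = x + α + 1 := by
      field_simp
    have q2 : (x + α) * (x / (x + α)) = x := by field_simp
    generalize (x + α + 1) / (x + 1) = u at *
    generalize x / (x + α) = v at *
    generalize hE1 : ((2 * x + α + β + 1) * (2 * x + α + β + 2)) = E1
    generalize hE2 : ((2 * x + α + β) * (2 * x + α + β + 2)) = E2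
    generalize hE3 : ((2 * x + α + β) * (2 * x + α + β + 1)) = E3
    linear_combination -2 * (x + 1) * P * A * (x + α + β + 1) / E1 * w / D * q1 + 2 * (x + β) / E3 * w * B * ((x + α + β) * Q) / D * q2

theorem jacobiL_refl (α β ε : ℂ) : jacobiL (-α) (-β) (ε + α + β) = jacobiL α β ε := by
  funext f n
  unfold jacobiL
  congr 1
  · congr 1
    · congr 2
      · ring
      · congr 1 <;> ring
    · congr 2
      · ring
      · congr 1 <;> ring
  · congr 2
    · ring
    · congr 1 <;> ring

theorem phiPd_refl (α β ε : ℂ) : phiPd (-α) (-β) (ε + α + β) = psiPd α β ε := by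
  funext i n
  unfold phiPd psiPd
  rw [show ε + α + β + -α + 1 = ε + β + 1 by ring,
    show (n : ℂ) + (ε + α + β) + -α + -β + 1 = n + ε + 1 by ring,
    show (n : ℂ) + (ε + α + β) = n + ε + α + β by ring]

theorem psiPd_main (α β ε : ℂ) (hg : GoodParams α β ε) (i : ℕ)
    (hi : (∀ m : ℤ, α ≠ m) ∨ (∃ m : ℤ, α = m ∧ (i : ℤ) ≤ |m| - 1)) (n : ℤ) :
    jacobiL α β ε (psiPd α β ε i) n - psiPd α β ε i n
          = (if i = 0 then 0 else psiPd α β ε (i - 1) n) := by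
  have := phiPd_main (-α) (-β) (ε + α + β) hg.refl' i (by
    rcases hi with h | ⟨m, rfl, hm⟩
    · exact Or.inl fun m h' => h (-m) (by push_cast; rw [← h', neg_neg])
    · exact Or.inr ⟨-m, by push_cast; rfl, by rwa [abs_neg]⟩) n
  rwa [jacobiL_refl, phiPd_refl] at this

theorem jacobiL_sign (α β ε c : ℂ) (f : ℤ → ℂ) (n : ℤ) :
    jacobiL α β ε (fun n => c * ((-1 : ℂ) ^ n * f n)) n
      = -(c * ((-1 : ℂ) ^ n * jacobiL β α ε f n)) := by
  unfold jacobiL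
  have h1 : (-1 : ℂ) ^ (n + 1) = -(-1) ^ n := by
    rw [zpow_add_one₀ (by norm_num)]; ring
  have h2 : (-1 : ℂ) ^ (n - 1) = -(-1) ^ n := by
    rw [zpow_sub_one₀ (by norm_num)]; norm_num
  simp only [h1, h2, add_right_comm _ β α]
  ring

theorem two_pow_aux (a b : ℂ) (i : ℕ) (x y : ℂ) : a * x / ((2 : ℂ) ^ i * b * y)
    = (-1) ^ i * (a * x / ((-2 : ℂ) ^ i * b * y)) := by
  have : (-2 : ℂ) ^ i = (-1) ^ i * 2 ^ i := by rw [← mul_pow]; norm_num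
  rw [this]
  rcases neg_one_pow_eq_or ℂ i with h | h <;> rw [h]
  · simp
  · rw [neg_one_mul, neg_one_mul, neg_mul, neg_mul, div_neg, neg_neg]

theorem phiMd_eq (α β ε : ℂ) (i : ℕ) :
    phiMd α β ε i = fun n => (-1) ^ i * ((-1 : ℂ) ^ n * phiPd β α ε i n) := by
  funext n
  unfold phiMd phiPd
  rw [two_pow_aux, add_right_comm _ β α]
  ring

theorem psiMd_eq (α β ε : ℂ) (i : ℕ) :
    psiMd α β ε i = fun n => (-1) ^ i * ((-1 : ℂ) ^ n * psiPd β α ε i n) := by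
  funext n
  unfold psiMd psiPd
  rw [two_pow_aux, add_right_comm _ β α, add_right_comm _ β α]
  ring

/-- The Jordan-chain relations
`(L_{α,β;ε} ∓ 1) φ_±^{(i)} = φ_±^{(i-1)}` and `(L_{α,β;ε} ∓ 1) ψ_±^{(i)} = ψ_±^{(i-1)}`
(with the convention that the `(-1)`-st functions vanish), valid for all `i ≥ 0`
when the relevant parameter is not an integer, and for `0 ≤ i ≤ |α|-1`
(resp. `0 ≤ i ≤ |β|-1`) when it is. -/
theorem stmt3 (α β ε : ℂ) (hgood : GoodParams α β ε) :
    (∀ i : ℕ, ((∀ m : ℤ, α ≠ (m : ℂ)) ∨ (∃ m : ℤ, α = (m : ℂ) ∧ (i : ℤ) ≤ |m| - 1)) →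
      ∀ n : ℤ,
        jacobiL α β ε (phiPd α β ε i) n - phiPd α β ε i n
          = (if i = 0 then 0 else phiPd α β ε (i - 1) n) ∧
        jacobiL α β ε (psiPd α β ε i) n - psiPd α β ε i n
          = (if i = 0 then 0 else psiPd α β ε (i - 1) n)) ∧
    (∀ i : ℕ, ((∀ m : ℤ, β ≠ (m : ℂ)) ∨ (∃ m : ℤ, β = (m : ℂ) ∧ (i : ℤ) ≤ |m| - 1)) →
      ∀ n : ℤ,
        jacobiL α β ε (phiMd α β ε i) n + phiMd α β ε i n
          = (if i = 0 then 0 else phiMd α β ε (i - 1) n) ∧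
        jacobiL α β ε (psiMd α β ε i) n + psiMd α β ε i n
          = (if i = 0 then 0 else psiMd α β ε (i - 1) n)) := by
  refine ⟨fun i hi n => ⟨phiPd_main α β ε hgood i hi n, psiPd_main α β ε hgood i hi n⟩,
    fun i hi n => ⟨?_, ?_⟩⟩
  · have h := phiPd_main β α ε hgood.swap i hi n
    rw [phiMd_eq, phiMd_eq, jacobiL_sign]
    rcases i with _ | k
    · simp only [if_true] at h ⊢
      linear_combination -(-1 : ℂ) ^ 0 * (-1) ^ n * h
    · simp only [Nat.add_sub_cancel, Nat.succ_ne_zero, if_false] at h ⊢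
      rw [← h]; ring
  · have h := psiPd_main β α ε hgood.swap i hi n
    rw [psiMd_eq, psiMd_eq, jacobiL_sign]
    rcases i with _ | k
    · simp only [if_true] at h ⊢
      linear_combination -(-1 : ℂ) ^ 0 * (-1) ^ n * h
    · simp only [Nat.add_sub_cancel, Nat.succ_ne_zero, if_false] at h ⊢
      rw [← h]; ring
end

section
/- Let L₀ be a difference operator and P a regular difference operator on functions ℤ → ℂ. Then there exists a difference operator L such that L ∘ P = P ∘ L₀ if and only if L₀(Ker P) ⊆ Ker P. Moreover, when it exists, the difference operator L satisfying L ∘ P = P ∘ L₀ is unique. -/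
/-- A difference operator `(Mf)(n) = ∑_{i=p}^{q} b_i(n) f(n+i)` on functions `ℤ → ℂ`,
with support `[p,q]`: the coefficients `b_p` and `b_q` are not identically zero. -/
structure DiffOp where
  p : ℤ
  q : ℤ
  hpq : p ≤ q
  b : ℤ → ℤ → ℂ
  hp : ∃ n : ℤ, b p n ≠ 0
  hq : ∃ n : ℤ, b q n ≠ 0

/-- The action of a difference operator on a function `ℤ → ℂ`. -/
noncomputable def DiffOp.app (M : DiffOp) (f : ℤ → ℂ) (n : ℤ) : ℂ :=
  ∑ i ∈ Finset.Icc M.p M.q, M.b i n * f (n + i)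

/-- A difference operator is regular if its first and last coefficients
vanish nowhere on `ℤ`. -/
def DiffOp.Regular (M : DiffOp) : Prop :=
  ∀ n : ℤ, M.b M.p n ≠ 0 ∧ M.b M.q n ≠ 0

/-- A difference operator as a linear endomorphism of `ℤ → ℂ`. -/
noncomputable def DiffOp.lin (M : DiffOp) : Module.End ℂ (ℤ → ℂ) where
  toFun f := M.app f
  map_add' f g := by
    funext n
    simp only [DiffOp.app, Pi.add_apply, mul_add]
    exact Finset.sum_add_distrib
  map_smul' c f := by
    funext n
    simp only [DiffOp.app, Pi.smul_apply, smul_eq_mul, RingHom.id_apply, Finset.mul_sum]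
    exact Finset.sum_congr rfl fun i _ => by ring

noncomputable def fwdSol (p q b : ℤ) (a : ℤ → ℤ → ℂ) (g : ℤ → ℂ) (m : ℤ) : ℂ :=
  if hm : b + q < m then
    (g (m - q) - ∑ i ∈ (Finset.Icc p (q - 1)).attach,
      a i.1 (m - q) * fwdSol p q b a g (m - q + i.1)) / a q (m - q)
  else 0
termination_by (m - b - q).toNat
decreasing_by
  have := Finset.mem_Icc.1 i.2
  omega

lemma fwd_exists (p q b : ℤ) (hpq : p ≤ q) (a : ℤ → ℤ → ℂ) (ha : ∀ n, a q n ≠ 0)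
    (g : ℤ → ℂ) (hg : ∀ n, n ≤ b → g n = 0) :
    ∃ h : ℤ → ℂ, (∀ m, m ≤ b + q → h m = 0) ∧
      ∀ n, ∑ i ∈ Finset.Icc p q, a i n * h (n + i) = g n := by
  have h0 : ∀ m, m ≤ b + q → fwdSol p q b a g m = 0 := by
    intro m hm
    rw [fwdSol, dif_neg (by omega)]
  refine ⟨fwdSol p q b a g, h0, fun n => ?_⟩
  by_cases hn : n ≤ b
  · rw [hg n hn]
    refine Finset.sum_eq_zero fun i hi => ?_
    have := Finset.mem_Icc.1 hi
    rw [h0 _ (by omega), mul_zero]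
  · have hI : Finset.Icc p q = insert q (Finset.Icc p (q - 1)) := by
      ext x; simp only [Finset.mem_insert, Finset.mem_Icc]; omega
    rw [hI, Finset.sum_insert (by simp)]
    have h1 := fwdSol.eq_1 p q b a g (n + q)
    rw [dif_pos (by omega)] at h1
    simp only [add_sub_cancel_right] at h1
    rw [Finset.sum_attach (Finset.Icc p (q - 1))
      (fun i => a i n * fwdSol p q b a g (n + i))] at h1
    rw [h1]
    field_simp [ha n]
    ring

lemma bwd_exists (p q b : ℤ) (hpq : p ≤ q) (a : ℤ → ℤ → ℂ) (ha : ∀ n, a p n ≠ 0)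
    (g : ℤ → ℂ) (hg : ∀ n, b ≤ n → g n = 0) :
    ∃ h : ℤ → ℂ, (∀ m, b + p ≤ m → h m = 0) ∧
      ∀ n, ∑ i ∈ Finset.Icc p q, a i n * h (n + i) = g n := by
  obtain ⟨h, h1, h2⟩ := fwd_exists (-q) (-p) (-b) (by omega) (fun i n => a (-i) (-n))
    (fun n => by simpa using ha (-n)) (fun n => g (-n)) (fun n hn => hg _ (by omega))
  refine ⟨fun m => h (-m), fun m hm => h1 _ (by omega), fun n => ?_⟩
  have := h2 (-n)
  simp only [neg_neg] at this
  rw [← this]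
  refine Finset.sum_nbij' (fun i => -i) (fun i => -i) ?_ ?_ ?_ ?_ ?_
  · intro i hi; simp only [Finset.mem_Icc] at *; omega
  · intro i hi; simp only [Finset.mem_Icc] at *; omega
  · intro i hi; simp
  · intro i hi; simp
  · intro i hi; simp only [neg_neg]; congr 2; ring

lemma solve (P : DiffOp) (hreg : P.Regular) (a b : ℤ) (hab : a ≤ b + 1) (g : ℤ → ℂ)
    (hg : ∀ n, a ≤ n → n ≤ b → g n = 0) :
    ∃ h : ℤ → ℂ, (∀ m, a + P.p ≤ m → m ≤ b + P.q → h m = 0) ∧ P.app h = g := by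
  obtain ⟨h, h1, h2⟩ := fwd_exists P.p P.q b P.hpq P.b (fun n => (hreg n).2)
    (fun n => if n ≤ b then 0 else g n) (fun n hn => if_pos hn)
  obtain ⟨k, k1, k2⟩ := bwd_exists P.p P.q a P.hpq P.b (fun n => (hreg n).1)
    (fun n => if a ≤ n then 0 else g n) (fun n hn => if_pos hn)
  refine ⟨h + k, fun m ha hb => by simp [h1 m hb, k1 m ha], ?_⟩
  change P.lin (h + k) = g
  rw [map_add]
  funext n
  have e1 : P.lin h n = _ := h2 n
  have e2 : P.lin k n = _ := k2 n
  rw [Pi.add_apply, e1, e2]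
  by_cases c1 : n ≤ b <;> by_cases c2 : a ≤ n
  · simp [c1, c2, hg n c2 c1]
  · simp [c1, c2]
  · simp [c1, c2]
  · omega

lemma app_low (M : DiffOp) (f : ℤ → ℂ) (k : ℤ) (hf : ∀ m, k + M.p < m → f m = 0) :
    M.app f k = M.b M.p k * f (k + M.p) := by
  unfold DiffOp.app
  refine Finset.sum_eq_single M.p (fun i hi hne => ?_) (fun h => ?_)
  · have := Finset.mem_Icc.1 hi
    rw [hf _ (by omega), mul_zero]
  · exact absurd (Finset.mem_Icc.2 ⟨le_rfl, M.hpq⟩) h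

lemma app_high (M : DiffOp) (f : ℤ → ℂ) (k : ℤ) (hf : ∀ m, m < k + M.q → f m = 0) :
    M.app f k = M.b M.q k * f (k + M.q) := by
  unfold DiffOp.app
  refine Finset.sum_eq_single M.q (fun i hi hne => ?_) (fun h => ?_)
  · have := Finset.mem_Icc.1 hi
    rw [hf _ (by omega), mul_zero]
  · exact absurd (Finset.mem_Icc.2 ⟨M.hpq, le_rfl⟩) h

lemma app_congr (M : DiffOp) (f g : ℤ → ℂ) (n : ℤ)
    (h : ∀ m, n + M.p ≤ m → m ≤ n + M.q → f m = g m) : M.app f n = M.app g n := by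
  unfold DiffOp.app
  refine Finset.sum_congr rfl fun i hi => ?_
  have := Finset.mem_Icc.1 hi
  rw [h _ (by omega) (by omega)]

lemma coeffs (L₀ P : DiffOp) (hreg : P.Regular)
    (hk : ∀ f : ℤ → ℂ, P.app f = 0 → P.app (L₀.app f) = 0) (n : ℤ) :
    ∃ c : ℤ → ℂ, ∀ f, ∑ i ∈ Finset.Icc L₀.p L₀.q, c i * P.app f (n + i)
      = P.app (L₀.app f) n := by
  let ev : ℤ → Module.Dual ℂ (ℤ → ℂ) := fun m => LinearMap.proj m
  let ψ : Finset.Icc L₀.p L₀.q → Module.Dual ℂ (ℤ → ℂ) := fun i => ev (n + i.1) ∘ₗ P.lin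
  let φ : Module.Dual ℂ (ℤ → ℂ) := ev n ∘ₗ P.lin ∘ₗ L₀.lin
  have key : ⨅ i, LinearMap.ker (ψ i) ≤ LinearMap.ker φ := by
    intro f hf
    simp only [Submodule.mem_iInf, LinearMap.mem_ker] at hf
    have hf' : ∀ m, n + L₀.p ≤ m → m ≤ n + L₀.q → P.app f m = 0 := by
      intro m h1 h2
      have := hf ⟨m - n, Finset.mem_Icc.2 ⟨by omega, by omega⟩⟩
      have h3 : P.app f (n + (m - n)) = 0 := this
      simpa using h3
    have := L₀.hpq
    obtain ⟨h, h1, h2⟩ := solve P hreg (n + L₀.p) (n + L₀.q) (by omega) _ hf'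
    have h3 : P.app (f - h) = 0 := by
      change P.lin (f - h) = 0
      rw [map_sub, sub_eq_zero]; exact h2.symm
    have h4 := congrFun (hk _ h3) n
    rw [LinearMap.mem_ker]
    change P.app (L₀.app f) n = 0
    rw [← show P.app (L₀.app (f - h)) n = 0 from h4]
    refine app_congr _ _ _ _ fun m a1 a2 => app_congr _ _ _ _ fun l b1 b2 => ?_
    rw [Pi.sub_apply, h1 l (by omega) (by omega), sub_zero]
  have hs := mem_span_of_iInf_ker_le_ker key
  obtain ⟨c, hc⟩ := (Submodule.mem_span_range_iff_exists_fun ℂ).1 hs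
  refine ⟨fun i => if h : i ∈ Finset.Icc L₀.p L₀.q then c ⟨i, h⟩ else 0, fun f => ?_⟩
  have hcf := congrArg (fun T : Module.Dual ℂ (ℤ → ℂ) => T f) hc
  have h2 : φ f = P.app (L₀.app f) n := rfl
  rw [← h2, ← hcf, ← Finset.sum_coe_sort]
  simp only [LinearMap.sum_apply, LinearMap.smul_apply, smul_eq_mul]
  refine Finset.sum_congr rfl fun i _ => ?_
  rw [dif_pos i.2]
  rfl

/-- For a regular difference operator `P` and a difference operator
`L₀`, a difference operator `L` with `L ∘ P = P ∘ L₀` exists iff `L₀` preserves the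
kernel of `P`; moreover such an `L` is unique (as an operator). -/
theorem stmt6 (L₀ P : DiffOp) (hreg : P.Regular) :
    ((∃ L : DiffOp, ∀ f : ℤ → ℂ, L.app (P.app f) = P.app (L₀.app f)) ↔
      (∀ f : ℤ → ℂ, P.app f = 0 → P.app (L₀.app f) = 0)) ∧
    (∀ L L' : DiffOp,
      (∀ f : ℤ → ℂ, L.app (P.app f) = P.app (L₀.app f)) →
      (∀ f : ℤ → ℂ, L'.app (P.app f) = P.app (L₀.app f)) →
      ∀ f : ℤ → ℂ, L.app f = L'.app f) := by
  refine ⟨⟨?_, ?_⟩, ?_⟩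
  · rintro ⟨L, hL⟩ f hf
    rw [← hL, hf]
    exact L.lin.map_zero
  · intro hk
    choose c hc using coeffs L₀ P hreg hk
    have hpq := L₀.hpq
    refine ⟨⟨L₀.p, L₀.q, L₀.hpq, fun i n => c n i, ?_, ?_⟩, fun f => funext fun n => hc n f⟩
    · obtain ⟨k, hk0⟩ := L₀.hp
      refine ⟨k - P.p, fun h0 => ?_⟩
      have h := hc (k - P.p) (Pi.single (k + L₀.p) 1)
      have z : ∀ m, k + L₀.p < m → (Pi.single (k + L₀.p) 1 : ℤ → ℂ) m = 0 :=
        fun m hm => Pi.single_eq_of_ne (by omega) _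
      rw [app_low P (L₀.app _) (k - P.p) (fun m hm => by
        rw [app_low L₀ _ _ (fun l hl => z l (by omega)), z _ (by omega), mul_zero])] at h
      rw [sub_add_cancel, app_low L₀ _ _ z, Pi.single_eq_same, Finset.sum_eq_zero] at h
      · simp [hk0, (hreg (k - P.p)).1] at h
      · intro i hi
        have := Finset.mem_Icc.1 hi
        by_cases e : i = L₀.p
        · subst e; rw [show c (k - P.p) L₀.p = 0 from h0, zero_mul]
        · rw [app_low P _ _ (fun l hl => z l (by omega)), z _ (by omega), mul_zero, mul_zero]
    · obtain ⟨k, hk0⟩ := L₀.hq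
      refine ⟨k - P.q, fun h0 => ?_⟩
      have h := hc (k - P.q) (Pi.single (k + L₀.q) 1)
      have z : ∀ m, m < k + L₀.q → (Pi.single (k + L₀.q) 1 : ℤ → ℂ) m = 0 :=
        fun m hm => Pi.single_eq_of_ne (by omega) _
      rw [app_high P (L₀.app _) (k - P.q) (fun m hm => by
        rw [app_high L₀ _ _ (fun l hl => z l (by omega)), z _ (by omega), mul_zero])] at h
      rw [sub_add_cancel, app_high L₀ _ _ z, Pi.single_eq_same, Finset.sum_eq_zero] at h
      · simp [hk0, (hreg (k - P.q)).2] at h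
      · intro i hi
        have := Finset.mem_Icc.1 hi
        by_cases e : i = L₀.q
        · subst e; rw [show c (k - P.q) L₀.q = 0 from h0, zero_mul]
        · rw [app_high P _ _ (fun l hl => z l (by omega)), z _ (by omega), mul_zero, mul_zero]
  · intro L L' h h' f
    obtain ⟨g, -, rfl⟩ := solve P hreg 1 0 (by omega) f (fun n _ _ => by omega)
    rw [h, h']
end

section
/- Let P be a regular difference operator with support [m₁,m₂] whose leading coefficient is identically 1, i.e. (Pf)(n) = f(n+m₂) + ∑_{i=m₁}^{m₂−1} b_i(n)·f(n+i), set m = m₂ − m₁, and let f^{(1)},…,f^{(m)} be a basis of Ker P. Then for every n ∈ ℤ the m×m matrix (f^{(i)}(n+j))_{1≤i≤m, m₁≤j≤m₂−1} is invertible, and for every function f : ℤ → ℂ and every n ∈ ℤ, (Pf)(n) equals the determinant of the (m+1)×(m+1) matrix whose rows, indexed by j = m₁,…,m₂, are (f^{(1)}(n+j),…,f^{(m)}(n+j), f(n+j)), divided by the determinant of the m×m matrix (f^{(i)}(n+j))_{1≤i≤m, m₁≤j≤m₂−1}. -/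
theorem app_eq_fin (P : DiffOp) (m : ℕ) (hm : (m : ℤ) = P.q - P.p) (f : ℤ → ℂ) (n : ℤ) :
    P.app f n = ∑ j : Fin (m + 1), P.b (P.p + (j : ℕ)) n * f (n + P.p + (j : ℕ)) := by
  unfold DiffOp.app
  rw [Fin.sum_univ_eq_sum_range (fun j : ℕ => P.b (P.p + j) n * f (n + P.p + j)) (m + 1)]
  symm
  refine Finset.sum_bij (fun (j : ℕ) _ => P.p + (j : ℤ)) ?_ ?_ ?_ ?_
  · intro a ha
    simp only [Finset.mem_range, Finset.mem_Icc] at *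
    omega
  · intro a _ b _ h
    omega
  · intro b hb
    simp only [Finset.mem_Icc] at hb
    refine ⟨(b - P.p).toNat, ?_, ?_⟩
    · simp only [Finset.mem_range]
      omega
    · omega
  · intro a _
    rw [add_assoc]

theorem ker_zero (P : DiffOp) (hreg : P.Regular) (m : ℕ) (hm : (m : ℤ) = P.q - P.p)
    (g : ℤ → ℂ) (hg : ∀ n, P.app g n = 0) (k : ℤ)
    (hw : ∀ j : ℕ, j < m → g (k + j) = 0) : g = 0 := by
  have hf : ∀ k : ℤ, (∀ j : ℕ, j < m → g (k + j) = 0) → g (k + m) = 0 := by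
    intro k hw
    have h := hg (k - P.p)
    rw [app_eq_fin P m hm, Fin.sum_univ_castSucc, Finset.sum_eq_zero] at h
    · have e : P.p + (m : ℤ) = P.q := by omega
      simpa [e, (hreg (k - P.p)).2] using h
    · intro j _
      have := hw j j.2
      simp [this]
  have hb : ∀ k : ℤ, (∀ j : ℕ, j < m → g (k + j) = 0) → g (k - 1) = 0 := by
    intro k hw
    have h := hg (k - 1 - P.p)
    rw [app_eq_fin P m hm, Fin.sum_univ_succ, Finset.sum_eq_zero] at h
    · simpa [(hreg (k - 1 - P.p)).1] using h
    · intro j _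
      have := hw j j.2
      have e : k - 1 - P.p + P.p + ((j.succ : Fin (m + 1)) : ℕ) = k + (j : ℕ) := by
        simp
      rw [e, this, mul_zero]
  have hall : ∀ l : ℤ, ∀ j : ℕ, j < m → g (l + j) = 0 := by
    intro l
    induction l using Int.inductionOn' (b := k) with
    | zero => exact hw
    | succ l _ ih =>
      intro j hj
      rcases Nat.lt_or_ge (j + 1) m with h | h
      · have := ih (j + 1) h
        rw [← this]; congr 1; push_cast; ring
      · have := hf l ih
        have e : m = j + 1 := by omega
        rw [← this, e]; congr 1; push_cast; ring
    | pred l _ ih =>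
      intro j hj
      rcases j with _ | j
      · simpa using hb l ih
      · have := ih j (by omega)
        rw [← this]; congr 1; push_cast; ring
  funext x
  have := hf (x - m) (hall _)
  simpa using this

/-- Reconstruction of a regular difference operator with leading
coefficient `1` from a basis of its kernel, via quotients of determinants. -/
theorem stmt8 (P : DiffOp) (hreg : P.Regular) (hlead : ∀ n : ℤ, P.b P.q n = 1)
    (m : ℕ) (hm : (m : ℤ) = P.q - P.p)
    (F : Fin m → (ℤ → ℂ))
    (hker : ∀ i, P.app (F i) = 0)
    (hind : LinearIndependent ℂ F)
    (hspan : Submodule.span ℂ (Set.range F) = LinearMap.ker P.lin) :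
    (∀ n : ℤ,
      (Matrix.of fun j i : Fin m => F i (n + P.p + (j : ℕ))).det ≠ 0) ∧
    (∀ (f : ℤ → ℂ) (n : ℤ),
      P.app f n =
        (Matrix.of fun (j c : Fin (m + 1)) =>
          if h : (c : ℕ) < m then F ⟨(c : ℕ), h⟩ (n + P.p + (j : ℕ))
          else f (n + P.p + (j : ℕ))).det /
        (Matrix.of fun j i : Fin m => F i (n + P.p + (j : ℕ))).det) := by
  have key : ∀ n : ℤ,
      (Matrix.of fun j i : Fin m => F i (n + P.p + (j : ℕ))).det ≠ 0 := by
    intro n hdet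
    obtain ⟨v, hv, hMv⟩ := Matrix.exists_mulVec_eq_zero_iff.mpr hdet
    have hsum : ∑ i, v i • F i = 0 := by
      apply ker_zero P hreg m hm _ _ (n + P.p)
      · intro j hj
        have := congrFun hMv ⟨j, hj⟩
        simp only [Matrix.mulVec, dotProduct, Matrix.of_apply, Pi.zero_apply] at this
        rw [← this]
        simp [Finset.sum_apply, mul_comm]
      · intro k
        have h : P.lin (∑ i, v i • F i) = 0 := by
          rw [map_sum]
          apply Finset.sum_eq_zero
          intro i _
          rw [map_smul]
          have : P.lin (F i) = 0 := hker i
          rw [this, smul_zero]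
        exact congrFun h k
    exact hv (funext (Fintype.linearIndependent_iff.mp hind v hsum))
  refine ⟨key, ?_⟩
  intro f n
  rw [eq_div_iff (key n)]
  set A : Matrix (Fin (m + 1)) (Fin (m + 1)) ℂ := Matrix.of fun (j c : Fin (m + 1)) =>
          if h : (c : ℕ) < m then F ⟨(c : ℕ), h⟩ (n + P.p + (j : ℕ))
          else f (n + P.p + (j : ℕ)) with hA
  have h1 := Matrix.det_updateRow_sum A (Fin.last m) (fun j => P.b (P.p + (j : ℕ)) n)
  have e : P.p + (m : ℤ) = P.q := by omega
  simp only [Fin.val_last, e, hlead, one_smul] at h1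
  rw [← h1, Matrix.det_succ_row _ (Fin.last m), Fin.sum_univ_castSucc, Finset.sum_eq_zero]
  · have h2 : (∑ k : Fin (m + 1), P.b (P.p + (k : ℕ)) n • A k) (Fin.last m) = P.app f n := by
      rw [app_eq_fin P m hm]
      simp [Finset.sum_apply, hA]
    rw [Matrix.updateRow_self, h2, zero_add]
    have h3 : ((-1 : ℂ)) ^ (((Fin.last m : Fin (m + 1)) : ℕ) + ((Fin.last m : Fin (m + 1)) : ℕ)) = 1 :=
      Even.neg_one_pow ⟨_, rfl⟩
    rw [h3, one_mul]
    congr 2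
    ext i j
    simp [hA, Matrix.updateRow_apply, Fin.castSucc_ne_last]
  · intro c _
    have h2 : (∑ k : Fin (m + 1), P.b (P.p + (k : ℕ)) n • A k) c.castSucc = 0 := by
      have := congrFun (hker c) n
      rw [app_eq_fin P m hm] at this
      simpa [Finset.sum_apply, hA] using this
    rw [Matrix.updateRow_self, h2]
    simp
end

section
/- Let P be a regular difference operator and let L, L₀ be difference operators on functions ℤ → ℂ satisfying L ∘ P = P ∘ L₀. If L₀ has support [p,q], then L also has support [p,q]; moreover L is regular if and only if L₀ is regular. -/
theorem app_single (M : DiffOp) (m n : ℤ) :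
    M.app (Pi.single m 1) n = if M.p ≤ m - n ∧ m - n ≤ M.q then M.b (m - n) n else 0 := by
  unfold DiffOp.app
  have h : ∀ i ∈ Finset.Icc M.p M.q, M.b i n * (Pi.single m 1 : ℤ → ℂ) (n + i)
      = if m - n = i then M.b i n else 0 := by
    intro i _
    by_cases hi : m - n = i
    · have : n + i = m := by omega
      simp [hi, this]
    · have : n + i ≠ m := by omega
      simp [hi, this]
  rw [Finset.sum_congr rfl h, Finset.sum_ite_eq]
  simp only [Finset.mem_Icc]

theorem comp_top (M N : DiffOp) (n : ℤ) :
    M.app (N.app (Pi.single (n + M.q + N.q) 1)) n = M.b M.q n * N.b N.q (n + M.q) := by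
  have hM := M.hpq
  have hN := N.hpq
  rw [DiffOp.app, Finset.sum_eq_single M.q]
  · rw [app_single, if_pos (by omega)]
    congr 2
    omega
  · intro i hi hne
    rw [Finset.mem_Icc] at hi
    rw [app_single, if_neg (by omega), mul_zero]
  · intro h
    exact absurd (Finset.mem_Icc.2 ⟨hM, le_rfl⟩) h

theorem comp_bot (M N : DiffOp) (n : ℤ) :
    M.app (N.app (Pi.single (n + M.p + N.p) 1)) n = M.b M.p n * N.b N.p (n + M.p) := by
  have hM := M.hpq
  have hN := N.hpq
  rw [DiffOp.app, Finset.sum_eq_single M.p]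
  · rw [app_single, if_pos (by omega)]
    congr 2
    omega
  · intro i hi hne
    rw [Finset.mem_Icc] at hi
    rw [app_single, if_neg (by omega), mul_zero]
  · intro h
    exact absurd (Finset.mem_Icc.2 ⟨le_rfl, hM⟩) h

theorem comp_out (M N : DiffOp) (n m : ℤ) (h : m < n + M.p + N.p ∨ n + M.q + N.q < m) :
    M.app (N.app (Pi.single m 1)) n = 0 := by
  rw [DiffOp.app]
  refine Finset.sum_eq_zero fun i hi => ?_
  rw [Finset.mem_Icc] at hi
  rw [app_single, if_neg (by omega), mul_zero]

/-- If `P` is regular and `L ∘ P = P ∘ L₀`, then `L` has the same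
support as `L₀`, and `L` is regular iff `L₀` is. -/
theorem stmt9 (P L₀ L : DiffOp) (hreg : P.Regular)
    (hL : ∀ f : ℤ → ℂ, L.app (P.app f) = P.app (L₀.app f)) :
    L.p = L₀.p ∧ L.q = L₀.q ∧ (L.Regular ↔ L₀.Regular) := by
  have hq : L.q = L₀.q := by
    rcases lt_trichotomy L.q L₀.q with h | h | h
    · exfalso
      obtain ⟨n, hn⟩ := L₀.hq
      have h1 := comp_top P L₀ (n - P.q)
      rw [← hL, comp_out L P _ _ (by right; omega), sub_add_cancel] at h1
      exact mul_ne_zero (hreg _).2 hn h1.symm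
    · exact h
    · exfalso
      obtain ⟨n, hn⟩ := L.hq
      have h1 := comp_top L P n
      rw [hL, comp_out P L₀ _ _ (by right; omega)] at h1
      exact mul_ne_zero hn (hreg _).2 h1.symm
  have hp : L.p = L₀.p := by
    rcases lt_trichotomy L.p L₀.p with h | h | h
    · exfalso
      obtain ⟨n, hn⟩ := L.hp
      have h1 := comp_bot L P n
      rw [hL, comp_out P L₀ _ _ (by left; omega)] at h1
      exact mul_ne_zero hn (hreg _).1 h1.symm
    · exact h
    · exfalso
      obtain ⟨n, hn⟩ := L₀.hp
      have h1 := comp_bot P L₀ (n - P.p)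
      rw [← hL, comp_out L P _ _ (by left; omega), sub_add_cancel] at h1
      exact mul_ne_zero (hreg _).1 hn h1.symm
  have eq_q : ∀ n, L.b L.q n * P.b P.q (n + L.q) = P.b P.q n * L₀.b L₀.q (n + P.q) := by
    intro n
    rw [← comp_top, ← comp_top, hL, show n + L.q + P.q = n + P.q + L₀.q by omega]
  have eq_p : ∀ n, L.b L.p n * P.b P.p (n + L.p) = P.b P.p n * L₀.b L₀.p (n + P.p) := by
    intro n
    rw [← comp_bot, ← comp_bot, hL, show n + L.p + P.p = n + P.p + L₀.p by omega]
  refine ⟨hp, hq, fun h n => ⟨fun h0 => ?_, fun h0 => ?_⟩, fun h n => ⟨fun h0 => ?_, fun h0 => ?_⟩⟩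
  · have := eq_p (n - P.p)
    rw [sub_add_cancel, h0, mul_zero] at this
    exact mul_ne_zero (h _).1 (hreg _).1 this
  · have := eq_q (n - P.q)
    rw [sub_add_cancel, h0, mul_zero] at this
    exact mul_ne_zero (h _).2 (hreg _).2 this
  · have := eq_p n
    rw [h0, zero_mul] at this
    exact mul_ne_zero (hreg _).1 (h _).1 this.symm
  · have := eq_q n
    rw [h0, zero_mul] at this
    exact mul_ne_zero (hreg _).2 (h _).2 this.symm
end

section
/- Assume the parameters A, B, C, D are admissible, so the operator P is defined, and write a₀(n), b₀(n), c₀(n) for the three coefficients of L_{α,β;ε}, so that (L_{α,β;ε}f)(n) = a₀(n)f(n+1) + b₀(n)f(n) + c₀(n)f(n−1). Suppose a, b, c : ℤ → ℂ are such that the operator (Lf)(n) = a(n)f(n+1) + b(n)f(n) + c(n)f(n−1) satisfies L ∘ P = P ∘ L_{α,β;ε}. Then for all n ∈ ℤ: a(n) = a₀(n); b(n) = b₀(n) + a₀(n)·det_{−1}(n+1)/det(n+1) − a₀(n−1)·det_{−1}(n)/det(n); and c(n) = c₀(n−k−l)·det(n−1)·det(n+1)/det(n)². -/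
/-- The functions `f^{(i)}(n)` built from the parameters `A, B, C, D`. -/
noncomputable def ffun (α β ε : ℂ) (k : ℕ) (A B C D : ℕ → ℂ) (i : ℕ) (n : ℤ) : ℂ :=
  if i < k then
    ∑ r ∈ Finset.range (i + 1), (A r * phiPd α β ε (i - r) n + B r * psiPd α β ε (i - r) n)
  else
    ∑ r ∈ Finset.range (i - k + 1),
      (C r * phiMd α β ε (i - k - r) n + D r * psiMd α β ε (i - k - r) n)

/-- `det(n)`: the `(k+l)×(k+l)` determinant of `(f^{(i)}(n+j))`,
`0 ≤ i ≤ k+l-1`, `-(k+l) ≤ j ≤ -1`. -/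
noncomputable def detFun (α β ε : ℂ) (k l : ℕ) (A B C D : ℕ → ℂ) (n : ℤ) : ℂ :=
  (Matrix.of fun i j : Fin (k + l) =>
    ffun α β ε k A B C D (i : ℕ) (n - (k + l : ℕ) + (j : ℕ))).det

/-- `det_{-r}(n)`: the `(k+l)×(k+l)` determinant of `(f^{(i)}(n+j))` where `j` runs
over `{-(k+l),…,0} ∖ {-r}`. -/
noncomputable def detrFun (α β ε : ℂ) (k l : ℕ) (A B C D : ℕ → ℂ) (r : ℕ) (n : ℤ) : ℂ :=
  (Matrix.of fun i j : Fin (k + l) =>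
    ffun α β ε k A B C D (i : ℕ)
      (if (j : ℕ) < k + l - r then n - (k + l : ℕ) + (j : ℕ)
       else n - (k + l : ℕ) + (j : ℕ) + 1)).det

/-- The Darboux operator `P`:
`(Pf)(n) = ∑_{r=0}^{k+l} (−1)^r (det_{−r}(n)/det(n)) f(n−r)`. -/
noncomputable def Pop (α β ε : ℂ) (k l : ℕ) (A B C D : ℕ → ℂ) (f : ℤ → ℂ) (n : ℤ) : ℂ :=
  ∑ r ∈ Finset.range (k + l + 1),
    (-1 : ℂ) ^ r * (detrFun α β ε k l A B C D r n / detFun α β ε k l A B C D n) * f (n - r)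

/-- Coefficient of `f(n+1)` in the Jacobi operator. -/
noncomputable def a0 (α β ε : ℂ) (n : ℤ) : ℂ :=
  2 * ((n : ℂ) + ε + 1) * ((n : ℂ) + ε + α + β + 1) /
    ((2 * (n : ℂ) + 2 * ε + α + β + 1) * (2 * (n : ℂ) + 2 * ε + α + β + 2))

/-- Coefficient of `f(n)` in the Jacobi operator. -/
noncomputable def b0 (α β ε : ℂ) (n : ℤ) : ℂ :=
  (β ^ 2 - α ^ 2) / ((2 * (n : ℂ) + 2 * ε + α + β) * (2 * (n : ℂ) + 2 * ε + α + β + 2))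

/-- Coefficient of `f(n-1)` in the Jacobi operator. -/
noncomputable def c0 (α β ε : ℂ) (n : ℤ) : ℂ :=
  2 * ((n : ℂ) + ε + α) * ((n : ℂ) + ε + β) /
    ((2 * (n : ℂ) + 2 * ε + α + β) * (2 * (n : ℂ) + 2 * ε + α + β + 1))

theorem aux_sum (K : ℕ) (g : ℕ → ℂ) (n m : ℤ) :
    (∑ r ∈ Finset.range (K + 1), g r * (if n - (r : ℤ) = m then (1 : ℂ) else 0))
      = if m ≤ n ∧ n ≤ m + K then g (n - m).toNat else 0 := by
  split_ifs with h
  · rw [Finset.sum_eq_single (n - m).toNat]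
    · rw [if_pos (by omega), mul_one]
    · intro r _ hr
      rw [if_neg (by omega), mul_zero]
    · intro hr
      exact absurd (Finset.mem_range.2 (by omega)) hr
  · apply Finset.sum_eq_zero
    intro r hr
    have := Finset.mem_range.1 hr
    rw [if_neg (by omega), mul_zero]

theorem aux_L (α β ε : ℂ) (m n : ℤ) :
    jacobiL α β ε (fun x => if x = m then 1 else 0) n
      = a0 α β ε n * (if n = m - 1 then 1 else 0) + b0 α β ε n * (if n = m then 1 else 0)
        + c0 α β ε n * (if n = m + 1 then 1 else 0) := by
  have h1 : (n + 1 = m) = (n = m - 1) := by apply propext; omega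
  have h2 : (n - 1 = m) = (n = m + 1) := by apply propext; omega
  simp only [jacobiL, a0, b0, c0, h1, h2]

theorem aux_PL (α β ε : ℂ) (K : ℕ) (p : ℕ → ℂ) (n m : ℤ) :
    (∑ r ∈ Finset.range (K + 1),
      p r * jacobiL α β ε (fun x => if x = m then 1 else 0) (n - (r : ℤ)))
      = (if m - 1 ≤ n ∧ n ≤ m - 1 + K then
          p (n - (m - 1)).toNat * a0 α β ε (n - ((n - (m - 1)).toNat : ℤ)) else 0)
      + (if m ≤ n ∧ n ≤ m + K then
          p (n - m).toNat * b0 α β ε (n - ((n - m).toNat : ℤ)) else 0)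
      + (if m + 1 ≤ n ∧ n ≤ m + 1 + K then
          p (n - (m + 1)).toNat * c0 α β ε (n - ((n - (m + 1)).toNat : ℤ)) else 0) := by
  rw [← aux_sum K (fun r => p r * a0 α β ε (n - (r : ℤ))),
    ← aux_sum K (fun r => p r * b0 α β ε (n - (r : ℤ))),
    ← aux_sum K (fun r => p r * c0 α β ε (n - (r : ℤ))),
    ← Finset.sum_add_distrib, ← Finset.sum_add_distrib]
  apply Finset.sum_congr rfl
  intro r _
  rw [aux_L]
  ring

theorem detr_zero (α β ε : ℂ) (k l : ℕ) (A B C D : ℕ → ℂ) (n : ℤ) :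
    detrFun α β ε k l A B C D 0 n = detFun α β ε k l A B C D n := by
  unfold detrFun detFun
  congr 2
  funext i j
  rw [if_pos (by omega)]

theorem detr_top (α β ε : ℂ) (k l : ℕ) (A B C D : ℕ → ℂ) (n : ℤ) :
    detrFun α β ε k l A B C D (k + l) n = detFun α β ε k l A B C D (n + 1) := by
  unfold detrFun detFun
  congr 2
  funext i j
  rw [if_neg (by omega)]
  congr 1
  ring

/-- Explicit formulas for the coefficients of the Darboux-transformed
operator `L` with `L ∘ P = P ∘ L_{α,β;ε}`. -/
theorem stmt10 (α β ε : ℂ) (hgood : GoodParams α β ε) (k l : ℕ) (hkl : 1 ≤ k + l)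
    (hkα : 0 < k → ∀ m : ℤ, -(k : ℤ) + 1 ≤ m → m ≤ (k : ℤ) - 1 → α ≠ (m : ℂ))
    (hlβ : 0 < l → ∀ m : ℤ, -(l : ℤ) + 1 ≤ m → m ≤ (l : ℤ) - 1 → β ≠ (m : ℂ))
    (A B C D : ℕ → ℂ)
    (hadm : ∀ n : ℤ, detFun α β ε k l A B C D n ≠ 0)
    (a b c : ℤ → ℂ)
    (hL : ∀ (f : ℤ → ℂ) (n : ℤ),
      a n * Pop α β ε k l A B C D f (n + 1) + b n * Pop α β ε k l A B C D f n
        + c n * Pop α β ε k l A B C D f (n - 1)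
      = Pop α β ε k l A B C D (jacobiL α β ε f) n) :
    ∀ n : ℤ,
      a n = a0 α β ε n ∧
      b n = b0 α β ε n
        + a0 α β ε n * detrFun α β ε k l A B C D 1 (n + 1) / detFun α β ε k l A B C D (n + 1)
        - a0 α β ε (n - 1) * detrFun α β ε k l A B C D 1 n / detFun α β ε k l A B C D n ∧
      c n = c0 α β ε (n - (k + l : ℕ)) * detFun α β ε k l A B C D (n - 1)
        * detFun α β ε k l A B C D (n + 1) / (detFun α β ε k l A B C D n) ^ 2 := by
  intro n
  have hP : ∀ (m q : ℤ), Pop α β ε k l A B C D (fun x => if x = m then 1 else 0) q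
      = if m ≤ q ∧ q ≤ m + ((k + l : ℕ) : ℤ) then
        (-1 : ℂ) ^ (q - m).toNat * (detrFun α β ε k l A B C D (q - m).toNat q /
          detFun α β ε k l A B C D q) else 0 := by
    intro m q
    exact aux_sum (k + l) (fun r => (-1 : ℂ) ^ r * (detrFun α β ε k l A B C D r q /
          detFun α β ε k l A B C D q)) q m
  have hQ := fun m : ℤ => aux_PL α β ε (k + l)
    (fun r => (-1 : ℂ) ^ r * (detrFun α β ε k l A B C D r n /
          detFun α β ε k l A B C D n)) n m
  have hE := fun m : ℤ => (hL (fun x => if x = m then 1 else 0) n).trans (hQ m)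
  simp only [hP] at hE
  have d0 := hadm n
  have d1 := hadm (n + 1)
  have d2 := hadm (n - 1)
  have ha : a n = a0 α β ε n := by
    have h := hE (n + 1)
    rw [if_pos (by omega), if_neg (by omega), if_neg (by omega), if_pos (by omega),
      if_neg (by omega), if_neg (by omega)] at h
    have e1 : (n + 1 - (n + 1)).toNat = 0 := by omega
    have e2 : (n - (n + 1 - 1)).toNat = 0 := by omega
    rw [e1, e2, detr_zero, detr_zero, div_self d0, div_self d1] at h
    simpa using h
  refine ⟨ha, ?_, ?_⟩
  · have h := hE n
    rw [if_pos (by omega), if_pos (by omega), if_neg (by omega), if_pos (by omega),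
      if_pos (by omega), if_neg (by omega)] at h
    have e1 : (n + 1 - n).toNat = 1 := by omega
    have e2 : (n - n).toNat = 0 := by omega
    have e3 : (n - (n - 1)).toNat = 1 := by omega
    rw [e1, e2, e3, detr_zero, div_self d0, ha] at h
    simp only [Nat.cast_one, Nat.cast_zero, sub_zero, pow_zero, pow_one, mul_zero, add_zero] at h
    linear_combination h
  · have h := hE (n - 1 - ((k + l : ℕ) : ℤ))
    rw [if_neg (by omega), if_neg (by omega), if_pos (by omega), if_neg (by omega),
      if_neg (by omega), if_pos (by omega)] at h
    have e1 : (n - 1 - (n - 1 - ((k + l : ℕ) : ℤ))).toNat = k + l := by omega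
    have e2 : (n - (n - 1 - ((k + l : ℕ) : ℤ) + 1)).toNat = k + l := by omega
    rw [e1, e2, detr_top, detr_top, sub_add_cancel] at h
    have hs : (-1 : ℂ) ^ (k + l) ≠ 0 := pow_ne_zero _ (by norm_num)
    have h' : c n * (detFun α β ε k l A B C D n / detFun α β ε k l A B C D (n - 1))
        = detFun α β ε k l A B C D (n + 1) / detFun α β ε k l A B C D n
          * c0 α β ε (n - ((k + l : ℕ) : ℤ)) := by
      apply mul_left_cancel₀ hs
      linear_combination h
    field_simp at h' ⊢
    linear_combination h'
end

section
/- As identities of linear operators on functions ℤ → ℂ: if α ≠ 0 then L_{α,β;ε} − Id = D₊^{α−1} ∘ D₋^{α}; if α ≠ −1 then L_{α,β;ε} − Id = D₋^{α+1} ∘ D₊^{α}; and, with no further restriction, L_{α,β;ε} + Id = D₊^{β−1} ∘ D₋^{β} = D₋^{β+1} ∘ D₊^{β}. -/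
/-- The operator `D₋^{α}`. -/
noncomputable def Dma (α β ε : ℂ) (f : ℤ → ℂ) (n : ℤ) : ℂ :=
  ((ε + α) / α) * ((((n : ℂ) + ε + α + β) / (2 * (n : ℂ) + 2 * ε + α + β)) * f n
    - (((n : ℂ) + ε + β) / (2 * (n : ℂ) + 2 * ε + α + β)) * f (n - 1))

/-- The operator `D₊^{α}`. -/
noncomputable def Dpa (α β ε : ℂ) (f : ℤ → ℂ) (n : ℤ) : ℂ :=
  ((α + 1) / (ε + α + 1)) *
    ((2 * ((n : ℂ) + ε + 1) / (2 * (n : ℂ) + 2 * ε + α + β + 2)) * f (n + 1)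
      - (2 * ((n : ℂ) + ε + α + 1) / (2 * (n : ℂ) + 2 * ε + α + β + 2)) * f n)

/-- The operator `D₋^{β}`. -/
noncomputable def Dmb (α β ε : ℂ) (f : ℤ → ℂ) (n : ℤ) : ℂ :=
  (((n : ℂ) + ε + α + β) / (2 * (n : ℂ) + 2 * ε + α + β)) * f n
    + (((n : ℂ) + ε + α) / (2 * (n : ℂ) + 2 * ε + α + β)) * f (n - 1)

/-- The operator `D₊^{β}`. -/
noncomputable def Dpb (α β ε : ℂ) (f : ℤ → ℂ) (n : ℤ) : ℂ :=
  (2 * ((n : ℂ) + ε + 1) / (2 * (n : ℂ) + 2 * ε + α + β + 2)) * f (n + 1)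
    + (2 * ((n : ℂ) + ε + β + 1) / (2 * (n : ℂ) + 2 * ε + α + β + 2)) * f n

/-- The factorizations
`L_{α,β;ε} − 1 = D₊^{α−1} ∘ D₋^{α} = D₋^{α+1} ∘ D₊^{α}` and
`L_{α,β;ε} + 1 = D₊^{β−1} ∘ D₋^{β} = D₋^{β+1} ∘ D₊^{β}`. -/
theorem stmt12 (α β ε : ℂ) (hgood : GoodParams α β ε) :
    (α ≠ 0 → ∀ (f : ℤ → ℂ) (n : ℤ),
      jacobiL α β ε f n - f n = Dpa (α - 1) β ε (Dma α β ε f) n) ∧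
    (α ≠ -1 → ∀ (f : ℤ → ℂ) (n : ℤ),
      jacobiL α β ε f n - f n = Dma (α + 1) β ε (Dpa α β ε f) n) ∧
    (∀ (f : ℤ → ℂ) (n : ℤ),
      jacobiL α β ε f n + f n = Dpb α (β - 1) ε (Dmb α β ε f) n) ∧
    (∀ (f : ℤ → ℂ) (n : ℤ),
      jacobiL α β ε f n + f n = Dmb α (β + 1) ε (Dpb α β ε f) n) := by
  have key : ∀ n k : ℤ, 2 * (n : ℂ) + 2 * ε + α + β + k ≠ 0 := by
    intro n k h
    apply (hgood (-(2 * n) - k)).2.2.2.2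
    push_cast
    linear_combination h
  have ha : ε + α ≠ 0 := by simpa using (hgood 0).2.1
  have ha1 : ε + α + 1 ≠ 0 := by
    intro h
    apply (hgood (-1)).2.1
    push_cast
    linear_combination h
  have aux : ∀ n : ℤ, ∃ s : ℂ, s ≠ 0 ∧ s + 1 ≠ 0 ∧ s + 2 ≠ 0 ∧
      β = s - 2 * (n : ℂ) - 2 * ε - α := by
    intro n
    refine ⟨2 * (n : ℂ) + 2 * ε + α + β, ?_, ?_, ?_, by ring⟩
    · simpa using key n 0
    · simpa using key n 1
    · simpa using key n 2
  refine ⟨?_, ?_, ?_, ?_⟩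
  · intro h0 f n
    obtain ⟨s, h1, h2, h3, hs⟩ := aux n
    have e0 : 2 * (n : ℂ) + 2 * ε + α + β = s := by rw [hs]; ring
    have e1 : 2 * (n : ℂ) + 2 * ε + (α - 1) + β + 2 = s + 1 := by rw [hs]; ring
    have e2 : 2 * ((n : ℂ) + 1) + 2 * ε + α + β = s + 2 := by rw [hs]; ring
    have e3 : α - 1 + 1 = α := by ring
    have e4 : ε + (α - 1) + 1 = ε + α := by ring
    simp only [jacobiL, Dpa, Dma, Int.cast_add, Int.cast_one, add_sub_cancel_right, e0, e1, e2, e3, e4]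
    clear e0 e1 e2
    subst hs
    field_simp
    ring
  · intro h0 f n
    have h0' : α + 1 ≠ 0 := fun h => h0 (by linear_combination h)
    obtain ⟨s, h1, h2, h3, hs⟩ := aux n
    have e0 : 2 * (n : ℂ) + 2 * ε + α + β = s := by rw [hs]; ring
    have e1 : 2 * (n : ℂ) + 2 * ε + (α + 1) + β = s + 1 := by rw [hs]; ring
    have e2 : 2 * ((n : ℂ) - 1) + 2 * ε + α + β + 2 = s := by rw [hs]; ring
    have e4 : ε + (α + 1) = ε + α + 1 := by ring
    simp only [jacobiL, Dpa, Dma, Int.cast_sub, Int.cast_one, sub_add_cancel, e0, e1, e2, e4]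
    clear e0 e1 e2
    subst hs
    field_simp
    ring
  · intro f n
    obtain ⟨s, h1, h2, h3, hs⟩ := aux n
    have e0 : 2 * (n : ℂ) + 2 * ε + α + β = s := by rw [hs]; ring
    have e1 : 2 * (n : ℂ) + 2 * ε + α + (β - 1) + 2 = s + 1 := by rw [hs]; ring
    have e2 : 2 * ((n : ℂ) + 1) + 2 * ε + α + β = s + 2 := by rw [hs]; ring
    simp only [jacobiL, Dpb, Dmb, Int.cast_add, Int.cast_one, add_sub_cancel_right, e0, e1, e2]
    clear e0 e1 e2
    subst hs
    field_simp
    ring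
  · intro f n
    obtain ⟨s, h1, h2, h3, hs⟩ := aux n
    have e0 : 2 * (n : ℂ) + 2 * ε + α + β = s := by rw [hs]; ring
    have e1 : 2 * (n : ℂ) + 2 * ε + α + (β + 1) = s + 1 := by rw [hs]; ring
    have e2 : 2 * ((n : ℂ) - 1) + 2 * ε + α + β + 2 = s := by rw [hs]; ring
    simp only [jacobiL, Dpb, Dmb, Int.cast_sub, Int.cast_one, sub_add_cancel, e0, e1, e2]
    clear e0 e1 e2
    subst hs
    field_simp
    ring
end

section
/- Assume α ∈ ℤ and β ∈ ℤ, and let j be an integer with 0 ≤ j ≤ |β|−1. Then there exist rational functions u, v ∈ ℂ(X) such that for all n ∈ ℤ: u(n) = ((ε+β+1)_n/(ε+α+1)_n)·((−(n+ε))_j·(n+ε+α+β+1)_j)/(2^j·j!·(β+1)_j) and v(n) = ((ε+1)_n/(ε+α+β+1)_n)·((−(n+ε+α+β))_j·(n+ε+1)_j)/(2^j·j!·(−β+1)_j), and moreover u(−X−2ε−α−β−1) = (−1)^{α+β}·u(X) and v(−X−2ε−α−β−1) = (−1)^{α+β}·v(X) as identities in ℂ(X). -/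
open Polynomial in
lemma poch_shift (x : ℂ) (hx : ∀ m : ℤ, x ≠ m) (n : ℤ) :
    poch x n * (x + n) = x * poch (x + 1) n := by
  unfold poch
  split_ifs with h
  · obtain ⟨m, rfl⟩ := Int.eq_ofNat_of_zero_le h
    have h1 := Finset.prod_range_succ (fun i : ℕ => x + (i : ℂ)) m
    have h2 := Finset.prod_range_succ' (fun i : ℕ => x + (i : ℂ)) m
    simp only [Int.toNat_natCast, Int.cast_natCast]
    rw [← h1, h2, mul_comm]
    congr 1
    · simp
    · refine Finset.prod_congr rfl fun i _ => ?_
      push_cast; ring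
  · obtain ⟨m, rfl⟩ : ∃ m : ℕ, n = -(m : ℤ) := ⟨(-n).toNat, by omega⟩
    have h1 := Finset.prod_range_succ (fun i : ℕ => x - m + (i : ℂ)) m
    have h2 := Finset.prod_range_succ' (fun i : ℕ => x - m + (i : ℂ)) m
    rw [h1] at h2
    simp only [neg_neg, Int.toNat_natCast, Int.cast_natCast, Int.cast_neg]
    have e1 : ∏ i ∈ Finset.range m, (x + -(m : ℂ) + (i : ℂ))
        = ∏ i ∈ Finset.range m, (x - m + (i : ℂ)) := by simp only [sub_eq_add_neg]
    have e2 : ∏ i ∈ Finset.range m, (x + 1 + -(m : ℂ) + (i : ℂ))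
        = ∏ i ∈ Finset.range m, (x - m + ((i + 1 : ℕ) : ℂ)) :=
      Finset.prod_congr rfl fun i _ => by push_cast; ring
    rw [e1, e2]
    have n1 : ∏ i ∈ Finset.range m, (x - m + (i : ℂ)) ≠ 0 := by
      refine Finset.prod_ne_zero_iff.2 fun i _ h0 => hx (m - i) ?_
      push_cast; linear_combination h0
    have n2 : ∏ i ∈ Finset.range m, (x - m + ((i + 1 : ℕ) : ℂ)) ≠ 0 := by
      refine Finset.prod_ne_zero_iff.2 fun i _ h0 => hx (m - (i + 1)) ?_
      push_cast at h0 ⊢; linear_combination h0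
    field_simp
    simp only [Nat.cast_zero, add_zero, sub_add_cancel] at h2
    linear_combination -h2

lemma poch_ne_zero (x : ℂ) (hx : ∀ m : ℤ, x ≠ m) (n : ℤ) : poch x n ≠ 0 := by
  unfold poch
  split_ifs with h
  · refine Finset.prod_ne_zero_iff.2 fun i _ h0 => hx (-i) ?_
    push_cast; linear_combination h0
  · refine inv_ne_zero (Finset.prod_ne_zero_iff.2 fun i _ h0 => hx (-n - i) ?_)
    push_cast; linear_combination h0

lemma poch_ratio (x : ℂ) (hx : ∀ m : ℤ, x ≠ m) (n : ℤ) (k : ℕ) :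
    poch x n * ∏ i ∈ Finset.range k, ((n : ℂ) + (x + i))
      = (∏ i ∈ Finset.range k, (x + (i : ℂ))) * poch (x + k) n := by
  induction k with
  | zero => simp
  | succ k ih =>
    have hs := poch_shift (x + k) (fun m h => hx (m - k) (by push_cast; linear_combination h)) n
    rw [Finset.prod_range_succ, Finset.prod_range_succ, ← mul_assoc, ih]
    have : x + ((k + 1 : ℕ) : ℂ) = x + k + 1 := by push_cast; ring
    rw [this]
    linear_combination (∏ i ∈ Finset.range k, (x + (i : ℂ))) * hs

open Polynomial in
lemma ratio_nat (x : ℂ) (hx : ∀ m : ℤ, x ≠ m) (k : ℕ) :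
    ∃ N D : ℂ[X], (∀ n : ℤ, N.eval (n : ℂ) ≠ 0) ∧ (∀ n : ℤ, D.eval (n : ℂ) ≠ 0) ∧
      (∀ n : ℤ, N.eval (n : ℂ) / D.eval (n : ℂ) = poch x n / poch (x + k) n) ∧
      N.comp (-X - C (x + (x + k) - 1)) = N ∧
      D.comp (-X - C (x + (x + k) - 1)) = C ((-1) ^ k) * D := by
  have hD : ∀ n : ℤ, (∏ i ∈ Finset.range k, (X + C (x + (i : ℂ)))).eval (n : ℂ)
      = ∏ i ∈ Finset.range k, ((n : ℂ) + (x + i)) := fun n => by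
    simp [eval_prod]
  have hN0 : ∏ i ∈ Finset.range k, (x + (i : ℂ)) ≠ 0 := by
    refine Finset.prod_ne_zero_iff.2 fun i _ h0 => hx (-i) ?_
    push_cast; linear_combination h0
  have hD0 : ∀ n : ℤ, ∏ i ∈ Finset.range k, ((n : ℂ) + (x + i)) ≠ 0 := fun n => by
    refine Finset.prod_ne_zero_iff.2 fun i _ h0 => hx (-n - i) ?_
    push_cast; linear_combination h0
  refine ⟨C (∏ i ∈ Finset.range k, (x + (i : ℂ))), ∏ i ∈ Finset.range k, (X + C (x + (i : ℂ))),
    fun n => ?_, fun n => ?_, fun n => ?_, ?_, ?_⟩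
  · rw [eval_C]; exact hN0
  · rw [hD]; exact hD0 n
  · rw [hD, eval_C, div_eq_div_iff (hD0 n) (poch_ne_zero _ (fun m h => hx (m - k)
      (by push_cast; linear_combination h)) n), poch_ratio x hx]
  · rw [C_comp]
  · rw [prod_comp, ← Finset.prod_range_reflect (fun i : ℕ => X + C (x + (i : ℂ)))]
    have : (C ((-1) ^ k) : ℂ[X]) = ∏ i ∈ Finset.range k, (-1 : ℂ[X]) := by simp
    rw [this, ← Finset.prod_mul_distrib]
    refine Finset.prod_congr rfl fun i hi => ?_
    have hi := Finset.mem_range.1 hi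
    have : ((k - 1 - i : ℕ) : ℂ) = k - 1 - i := by
      rw [Nat.sub_sub, Nat.cast_sub (by omega)]; push_cast; ring
    rw [this]
    simp only [add_comp, X_comp, C_comp, C_add, C_sub, C_1]
    ring

open Polynomial in
lemma ratio_int (x y : ℂ) (hx : ∀ m : ℤ, x ≠ m) (hy : ∀ m : ℤ, y ≠ m) (d : ℤ)
    (hd : y = x + d) (s : ℂ) (hs : s = x + y - 1) :
    ∃ N D : ℂ[X], (∀ n : ℤ, D.eval (n : ℂ) ≠ 0) ∧
      (∀ n : ℤ, N.eval (n : ℂ) / D.eval (n : ℂ) = poch x n / poch y n) ∧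
      N.comp (-X - C s) * D = C ((-1) ^ d) * (N * D.comp (-X - C s)) := by
  subst hs
  have hsq : ∀ k : ℕ, (C ((-1) ^ k) : ℂ[X]) * C ((-1) ^ k) = 1 := fun k => by
    rw [← C_mul, ← mul_pow]; simp
  rcases le_total 0 d with h | h
  · obtain ⟨k, rfl⟩ := Int.eq_ofNat_of_zero_le h
    obtain ⟨N, D, -, h2, h3, h4, h5⟩ := ratio_nat x hx k
    have hd' : y = x + k := by rw [hd]; simp
    rw [hd']
    refine ⟨N, D, h2, h3, ?_⟩
    rw [h4, h5, zpow_natCast]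
    linear_combination (-N * D) * hsq k
  · obtain ⟨k, rfl⟩ : ∃ k : ℕ, d = -(k : ℤ) := ⟨(-d).toNat, by omega⟩
    obtain ⟨N, D, h1, h2, h3, h4, h5⟩ := ratio_nat y hy k
    have hd' : x = y + k := by rw [hd]; simp
    have he : x + y - 1 = y + (y + k) - 1 := by rw [hd']; ring
    rw [he]
    refine ⟨D, N, h1, fun n => ?_, ?_⟩
    · rw [← inv_div, h3, inv_div, hd']
    · rw [h4, h5, zpow_neg, zpow_natCast, ← inv_pow]
      norm_num
      ring

open Polynomial in
lemma quad_part (e f s : ℂ) (hs : s = e + f) (j : ℕ) :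
    ∃ Q : ℂ[X], (∀ z : ℂ, Q.eval z = poch (-(z + e)) (j : ℤ) * poch (z + f) (j : ℤ)) ∧
      Q.comp (-X - C s) = Q := by
  subst hs
  refine ⟨(∏ i ∈ Finset.range j, (-(X + C e) + C (i : ℂ))) *
    ∏ i ∈ Finset.range j, (X + C f + C (i : ℂ)), fun z => ?_, ?_⟩
  · simp [poch, eval_prod]
  · rw [mul_comp, prod_comp, prod_comp, mul_comm]
    congr 1
    all_goals
      refine Finset.prod_congr rfl fun i _ => ?_
      simp only [add_comp, neg_comp, X_comp, C_comp, C_add]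
      ring

open Polynomial in
lemma combine (x y e f s c : ℂ) (hx : ∀ m : ℤ, x ≠ m) (hy : ∀ m : ℤ, y ≠ m) (d : ℤ)
    (hd : y = x + d) (hs : s = x + y - 1) (hs' : s = e + f) (j : ℕ) :
    ∃ N D : ℂ[X], (∀ n : ℤ, D.eval (n : ℂ) ≠ 0) ∧
      (∀ n : ℤ, N.eval (n : ℂ) / D.eval (n : ℂ) = poch x n / poch y n *
        (poch (-((n : ℂ) + e)) (j : ℤ) * poch ((n : ℂ) + f) (j : ℤ)) / c) ∧
      N.comp (-X - C s) * D = C ((-1) ^ d) * (N * D.comp (-X - C s)) := by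
  obtain ⟨N, D, h1, h2, h3⟩ := ratio_int x y hx hy d hd s hs
  obtain ⟨Q, q1, q2⟩ := quad_part e f s hs' j
  refine ⟨N * Q * C c⁻¹, D, h1, fun n => ?_, ?_⟩
  · rw [← h2, ← q1]
    simp only [eval_mul, eval_C]
    ring
  · rw [mul_comp, mul_comp, q2, C_comp]
    linear_combination (Q * C c⁻¹) * h3

/-- For `α, β ∈ ℤ` and `0 ≤ j ≤ |β|−1`, the functions
`(−1)^n Φ₋^{(j)}(n)` and `(−1)^n Ψ₋^{(j)}(n)` are restrictions to `ℤ` of rational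
functions which are `(−1)^{α+β}`-skew-invariant under `I` (stated in
cross-multiplied polynomial form). -/
theorem stmt17 (α β ε : ℂ) (hgood : GoodParams α β ε)
    (a b : ℤ) (hα : α = (a : ℂ)) (hβ : β = (b : ℂ)) (j : ℕ) (hj : (j : ℤ) ≤ |b| - 1) :
    ∃ uN uD vN vD : Polynomial ℂ,
      (∀ n : ℤ, uD.eval (n : ℂ) ≠ 0) ∧ (∀ n : ℤ, vD.eval (n : ℂ) ≠ 0) ∧
      (∀ n : ℤ, uN.eval (n : ℂ) / uD.eval (n : ℂ)
        = (poch (ε + β + 1) n / poch (ε + α + 1) n) *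
            (poch (-((n : ℂ) + ε)) (j : ℤ) * poch ((n : ℂ) + ε + α + β + 1) (j : ℤ)) /
            ((2 : ℂ) ^ j * (j.factorial : ℂ) * poch (β + 1) (j : ℤ))) ∧
      (∀ n : ℤ, vN.eval (n : ℂ) / vD.eval (n : ℂ)
        = (poch (ε + 1) n / poch (ε + α + β + 1) n) *
            (poch (-((n : ℂ) + ε + α + β)) (j : ℤ) * poch ((n : ℂ) + ε + 1) (j : ℤ)) /
            ((2 : ℂ) ^ j * (j.factorial : ℂ) * poch (-β + 1) (j : ℤ))) ∧
      uN.comp (-Polynomial.X - Polynomial.C (2 * ε + α + β + 1)) * uD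
        = Polynomial.C ((-1 : ℂ) ^ (a + b)) *
            (uN * (uD.comp (-Polynomial.X - Polynomial.C (2 * ε + α + β + 1)))) ∧
      vN.comp (-Polynomial.X - Polynomial.C (2 * ε + α + β + 1)) * vD
        = Polynomial.C ((-1 : ℂ) ^ (a + b)) *
            (vN * (vD.comp (-Polynomial.X - Polynomial.C (2 * ε + α + β + 1)))) := by
  have g1 : ∀ m : ℤ, ε + 1 ≠ m := fun m h => (hgood (m - 1)).1 (by push_cast; linear_combination h)
  have g2 : ∀ m : ℤ, ε + α + 1 ≠ m := fun m h =>
    (hgood (m - 1)).2.1 (by push_cast; linear_combination h)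
  have g3 : ∀ m : ℤ, ε + β + 1 ≠ m := fun m h =>
    (hgood (m - 1)).2.2.1 (by push_cast; linear_combination h)
  have g4 : ∀ m : ℤ, ε + α + β + 1 ≠ m := fun m h =>
    (hgood (m - 1)).2.2.2.1 (by push_cast; linear_combination h)
  obtain ⟨uN, uD, u1, u2, u3⟩ := combine (ε + β + 1) (ε + α + 1) ε (ε + α + β + 1)
    (2 * ε + α + β + 1) ((2 : ℂ) ^ j * (j.factorial : ℂ) * poch (β + 1) (j : ℤ)) g3 g2 (a - b)
    (by rw [hα, hβ]; push_cast; ring) (by ring) (by ring) j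
  obtain ⟨vN, vD, v1, v2, v3⟩ := combine (ε + 1) (ε + α + β + 1) (ε + α + β) (ε + 1)
    (2 * ε + α + β + 1) ((2 : ℂ) ^ j * (j.factorial : ℂ) * poch (-β + 1) (j : ℤ)) g1 g4 (a + b)
    (by rw [hα, hβ]; push_cast; ring) (by ring) (by ring) j
  have hsgn : (-1 : ℂ) ^ (a - b) = (-1) ^ (a + b) := by
    have : a + b = (a - b) + 2 * b := by ring
    rw [this, zpow_add₀ (by norm_num), zpow_mul]
    norm_num
  rw [hsgn] at u3
  refine ⟨uN, uD, vN, vD, u1, v1, fun n => ?_, fun n => ?_, u3, v3⟩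
  · rw [u2]; simp only [add_assoc]
  · rw [v2]; simp only [add_assoc]
end
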